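/- Let f : ℝ → ℝ be a terrain, G_L ⊆ ℝ a finite set of left guards with nonnegative weights w : G_L → ℝ, N ⊆ ℝ a finite set of points, and x : G_L → ℝ a nonnegative function. Let N_L = { p ∈ N : Σ_{g ∈ G_L, g < p, g sees p} x(g) ≥ 1/2 }. Then there exists A_L ⊆ G_L such that every p ∈ N_L is seen from the left by some guard in A_L and Σ_{g ∈ A_L} w(g) ≤ 2·Σ_{g ∈ G_L} w(g)·x(g). -/

import Mathlib

open scoped Classical

/-- `a` sees `b` on the terrain `f`. -/
def Sees (f : ℝ → ℝ) (a b : ℝ) : Prop :=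
  ∀ t ∈ Set.Icc (0:ℝ) 1, f ((1 - t) * a + t * b) ≤ (1 - t) * f a + t * f b

/-- A guard `g` sees a point `p` from the left. -/
def SeesLeft (f : ℝ → ℝ) (g p : ℝ) : Prop := g < p ∧ Sees f g p

/-!
If `a < b < c < d`, `a` sees `c` and `b` sees `d`, then `a` sees `d`: after subtracting the line
through `(a, f a)` and `(d, f d)` the terrain vanishes at `a` and `d`, and if `b` or `c` had
positive height, the higher of the two would lie above one of the two lines of sight.

Hence visibility from the left is `Γ`-free, and covering linear programs with a `Γ`-free matrix are
integral. To see this, process the points from left to right. Let `m` be the least weight of a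
guard covering the first point `p`, and lower the weights of all guards covering `p` by `m`; since
`p` is fractionally covered, the fractional cost drops by at least `m`. Take a cheap cover of the
other points for the lowered weights. Among the guards covering `p`, those further left cover more
of the other points, so the chosen guards covering `p` can be replaced by the leftmost of them, or,
if there is none, by a guard of lowered weight zero. Exactly one chosen guard now covers `p`, so
restoring the weights costs exactly `m`.

Points covered with value `1 / 2` by `x` are fully covered by `2 * x`, which accounts for the
factor `2`.
-/

section Terrain

variable {f : ℝ → ℝ} {a b c d z : ℝ}

theorem sees_sub_affine_iff (f : ℝ → ℝ) (m k a b : ℝ) :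
    Sees (fun z => f z - (m * z + k)) a b ↔ Sees f a b := by
  refine forall₂_congr fun t _ => ?_
  rw [← sub_nonneg, ← sub_nonneg (b := f _)]
  ring_nf

theorem Sees.apply_le_max (h : Sees f a b) (hz : z ∈ Set.Icc a b) : f z ≤ max (f a) (f b) := by
  rw [← segment_eq_Icc (hz.1.trans hz.2), segment_eq_image] at hz
  obtain ⟨t, ht, rfl⟩ := hz
  exact (h t ht).trans (Convex.combo_le_max _ _ (sub_nonneg.2 ht.2) ht.1 (sub_add_cancel 1 t))

theorem Sees.apply_lt_max (h : Sees f a b) (hne : f a ≠ f b) (hz : z ∈ Set.Ioo a b) :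
    f z < max (f a) (f b) := by
  rw [← openSegment_eq_Ioo (hz.1.trans hz.2), openSegment_eq_image] at hz
  obtain ⟨t, ht, rfl⟩ := hz
  refine (h t (Set.Ioo_subset_Icc_self ht)).trans_lt ?_
  rcases hne.lt_or_gt with hlt | hgt
  · rw [max_eq_right hlt.le]
    nlinarith [mul_lt_mul_of_pos_left hlt (sub_pos.2 ht.2)]
  · rw [max_eq_left hgt.le]
    nlinarith [mul_lt_mul_of_pos_left hgt ht.1]

theorem Sees.apply_nonpos_of_crossing (hab : a < b) (hbc : b < c) (hcd : c < d) (hac : Sees f a c)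
    (hbd : Sees f b d) (ha : f a = 0) (hd : f d = 0) (hz : z ∈ Set.Icc a d) : f z ≤ 0 := by
  have hc : f c ≤ 0 := by
    by_contra! hc
    have hcb : f c ≤ max (f b) (f d) := hbd.apply_le_max ⟨hbc.le, hcd.le⟩
    have hb : 0 < f b := by simpa only [hd, lt_max_iff, lt_irrefl, or_false] using hc.trans_le hcb
    have hb_lt_c : f b < f c := by
      simpa only [ha, max_eq_right hc.le] using hac.apply_lt_max (ha.trans_ne hc.ne) ⟨hab, hbc⟩
    have hc_lt_b : f c < f b := by
      simpa only [hd, max_eq_left hb.le] using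
        hbd.apply_lt_max (hd.trans_ne hb.ne).symm ⟨hbc, hcd⟩
    exact hb_lt_c.asymm hc_lt_b
  have hb : f b ≤ 0 := (hac.apply_le_max ⟨hab.le, hbc.le⟩).trans (max_le ha.le hc)
  rcases le_total z c with hzc | hcz
  · exact (hac.apply_le_max ⟨hz.1, hzc⟩).trans (max_le ha.le hc)
  · exact (hbd.apply_le_max ⟨hbc.le.trans hcz, hz.2⟩).trans (max_le hb hd.le)

theorem Sees.of_crossing (hab : a < b) (hbc : b < c) (hcd : c < d) (hac : Sees f a c)
    (hbd : Sees f b d) : Sees f a d := by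
  have had : a < d := hab.trans (hbc.trans hcd)
  let m := (f d - f a) / (d - a)
  rw [← sees_sub_affine_iff f m (f a - m * a)] at hac hbd ⊢
  set u : ℝ → ℝ := fun z => f z - (m * z + (f a - m * a)) with hu
  have hua : u a = 0 := by simp only [hu]; ring
  have hud : u d = 0 := by
    have hm : m * (d - a) = f d - f a := div_mul_cancel₀ _ (sub_pos.2 had).ne'
    simp only [hu]
    linear_combination -hm
  intro t ht
  rw [hua, hud, mul_zero, mul_zero, add_zero]
  refine hac.apply_nonpos_of_crossing hab hbc hcd hbd hua hud ?_
  rw [← segment_eq_Icc had.le, segment_eq_image]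
  exact ⟨t, ht, rfl⟩

end Terrain

section Covering

variable {α β 𝕜 : Type*}

/-- The incidence relation `R` between guards and points contains no `Γ`: in its incidence matrix,
with columns indexed by the points in increasing order and rows by the guards in *decreasing*
order, no two rows and two columns induce the submatrix with rows `1 1` and `1 0`. -/
def GammaFree [LT α] [LT β] (R : α → β → Prop) : Prop :=
  ∀ ⦃a b : α⦄ ⦃c d : β⦄, a < b → c < d → R a c → R b c → R b d → R a d

/-- The guards in `A` cover the points in `P`: an integral solution of the covering program. -/
def IsCover (R : α → β → Prop) (P : Finset β) (A : Finset α) : Prop :=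
  ∀ p ∈ P, ∃ g ∈ A, R g p

/-- The values `x` of the guards in `G` add up to at least `1` at each point of `P`: a feasible
solution of the covering program, whose nonnegativity is stated separately. -/
def IsFractionalCover [AddCommMonoidWithOne 𝕜] [LE 𝕜] (R : α → β → Prop) (P : Finset β)
    (G : Finset α) (x : α → 𝕜) : Prop :=
  ∀ p ∈ P, 1 ≤ ∑ g ∈ G with R g p, x g

/-- The weights `w`, lowered by `m` on the guards covering `p`. In the primal-dual reading `m` is
the dual variable of the covering constraint at `p`, and these are the reduced costs. -/
noncomputable def reducedWeight [Sub 𝕜] (R : α → β → Prop) (p : β) (m : 𝕜) (w : α → 𝕜)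
    (g : α) : 𝕜 :=
  if R g p then w g - m else w g

theorem sum_reducedWeight_mul [NonUnitalNonAssocRing 𝕜] (R : α → β → Prop) (p : β) (m : 𝕜)
    (w x : α → 𝕜) (A : Finset α) :
    ∑ g ∈ A, reducedWeight R p m w g * x g =
      ∑ g ∈ A, w g * x g - m * ∑ g ∈ A with R g p, x g := by
  rw [Finset.mul_sum, Finset.sum_filter, ← Finset.sum_sub_distrib]
  refine Finset.sum_congr rfl fun g _ => ?_
  by_cases hgp : R g p <;> simp [reducedWeight, hgp, sub_mul]

theorem reducedWeight_nonneg [AddGroup 𝕜] [LE 𝕜] [AddRightMono 𝕜] {R : α → β → Prop} {p : β}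
    {G : Finset α} {w : α → 𝕜} (hw : ∀ g ∈ G, 0 ≤ w g) {m : 𝕜} (hm : ∀ g ∈ G, R g p → m ≤ w g) :
    ∀ g ∈ G, 0 ≤ reducedWeight R p m w g := by
  intro g hg
  rw [reducedWeight]
  split_ifs with hgp
  · exact sub_nonneg.2 (hm g hg hgp)
  · exact hw g hg

theorem GammaFree.isCover_insert [PartialOrder α] [DecidableEq α] [LT β] [DecidableEq β]
    {R : α → β → Prop} (hR : GammaFree R) {p : β} {P : Finset β} (hpP : ∀ q ∈ P, p < q)
    {B : Finset α} (hB : IsCover R P B) {h : α} (hhp : R h p) (hleft : ∀ g ∈ B, R g p → h ≤ g) :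
    IsCover R (insert p P) (insert h {g ∈ B | ¬ R g p}) := by
  rw [IsCover, Finset.forall_mem_insert]
  refine ⟨⟨h, Finset.mem_insert_self _ _, hhp⟩, fun q hq => ?_⟩
  obtain ⟨g, hg, hgq⟩ := hB q hq
  by_cases hgp : R g p
  · refine ⟨h, Finset.mem_insert_self _ _, ?_⟩
    rcases (hleft g hg hgp).eq_or_lt with rfl | hlt
    · exact hgq
    · exact hR hlt (hpP q hq) hhp hgp hgq
  · exact ⟨g, Finset.mem_insert_of_mem (Finset.mem_filter.2 ⟨hg, hgp⟩), hgq⟩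

theorem exists_lowerBound_le_sum_filter [LinearOrder α] [AddCommMonoid 𝕜] [PartialOrder 𝕜]
    [IsOrderedAddMonoid 𝕜] {B G : Finset α} (hBG : B ⊆ G) {v : α → 𝕜} (hv : ∀ g ∈ B, 0 ≤ v g)
    {Q : α → Prop} {k : α} (hkG : k ∈ G) (hkQ : Q k) (hk : v k = 0) :
    ∃ h ∈ G, Q h ∧ (∀ g ∈ B, Q g → h ≤ g) ∧ v h ≤ ∑ g ∈ B with Q g, v g := by
  rcases ({g ∈ B | Q g} : Finset α).eq_empty_or_nonempty with hempty | hne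
  · exact ⟨k, hkG, hkQ, fun g hg hgQ => (Finset.filter_eq_empty_iff.1 hempty hg hgQ).elim,
      by rw [hempty, Finset.sum_empty, hk]⟩
  · have hmin := Finset.min'_mem _ hne
    obtain ⟨hminB, hminQ⟩ := Finset.mem_filter.1 hmin
    exact ⟨_, hBG hminB, hminQ,
      fun g hg hgQ => Finset.min'_le _ g (Finset.mem_filter.2 ⟨hg, hgQ⟩),
      Finset.single_le_sum (fun g hg => hv g (Finset.mem_filter.1 hg).1) hmin⟩

theorem GammaFree.exists_isCover_insert_sum_le [LinearOrder α] [LT β] [DecidableEq β]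
    [AddCommGroup 𝕜] [PartialOrder 𝕜] [IsOrderedAddMonoid 𝕜] {R : α → β → Prop} (hR : GammaFree R)
    {p : β} {P : Finset β} (hpP : ∀ q ∈ P, p < q) {G : Finset α} {w : α → 𝕜}
    (hw : ∀ g ∈ G, 0 ≤ w g) {k : α} (hkG : k ∈ G) (hkp : R k p)
    (hkmin : ∀ g ∈ G, R g p → w k ≤ w g) {B : Finset α} (hBG : B ⊆ G) (hB : IsCover R P B) :
    ∃ A ⊆ G, IsCover R (insert p P) A ∧
      ∑ g ∈ A, w g ≤ ∑ g ∈ B, reducedWeight R p (w k) w g + w k := by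
  set v := reducedWeight R p (w k) w with hv
  have hv_nonneg : ∀ g ∈ G, 0 ≤ v g := reducedWeight_nonneg hw hkmin
  have hvk : v k = 0 := by simp [hv, reducedWeight, hkp]
  obtain ⟨h, hhG, hhp, hleft, hvh⟩ := exists_lowerBound_le_sum_filter hBG
    (fun g hg => hv_nonneg g (hBG hg)) (Q := (R · p)) hkG hkp hvk
  refine ⟨insert h {g ∈ B | ¬ R g p},
    Finset.insert_subset hhG ((Finset.filter_subset _ _).trans hBG),
    hR.isCover_insert hpP hB hhp hleft, ?_⟩
  have hrest : ∑ g ∈ B with ¬ R g p, w g = ∑ g ∈ B with ¬ R g p, v g :=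
    Finset.sum_congr rfl fun g hg => (if_neg (Finset.mem_filter.1 hg).2).symm
  calc ∑ g ∈ insert h {g ∈ B | ¬ R g p}, w g
      = v h + w k + ∑ g ∈ B with ¬ R g p, v g := by
        rw [Finset.sum_insert (by simp [hhp]), hrest]
        simp [hv, reducedWeight, hhp]
    _ ≤ ∑ g ∈ B with R g p, v g + w k + ∑ g ∈ B with ¬ R g p, v g := by gcongr
    _ = ∑ g ∈ B, v g + w k := by
        rw [add_right_comm, Finset.sum_filter_add_sum_filter_not]

theorem GammaFree.exists_isCover_sum_le [LinearOrder α] [LinearOrder β] [Ring 𝕜] [LinearOrder 𝕜]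
    [IsStrictOrderedRing 𝕜] {R : α → β → Prop} (hR : GammaFree R) {P : Finset β} {G : Finset α}
    {w x : α → 𝕜} (hw : ∀ g ∈ G, 0 ≤ w g) (hx : ∀ g ∈ G, 0 ≤ x g)
    (hP : IsFractionalCover R P G x) :
    ∃ A ⊆ G, IsCover R P A ∧ ∑ g ∈ A, w g ≤ ∑ g ∈ G, w g * x g := by
  induction P using Finset.induction_on_min generalizing w with
  | empty =>
    exact ⟨∅, G.empty_subset, by simp [IsCover],
      Finset.sum_nonneg fun g hg => mul_nonneg (hw g hg) (hx g hg)⟩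
  | insert p P hpP ih =>
    obtain ⟨hp, hP⟩ := Finset.forall_mem_insert _ _ _ |>.1 hP
    obtain ⟨k, hkG, hkp, hkmin⟩ : ∃ k ∈ G, R k p ∧ ∀ g ∈ G, R g p → w k ≤ w g := by
      have hne : ({g ∈ G | R g p} : Finset α).Nonempty :=
        Finset.nonempty_of_sum_ne_zero (zero_lt_one.trans_le hp).ne'
      simpa only [Finset.mem_filter, and_assoc, and_imp] using Finset.exists_min_image _ w hne
    obtain ⟨B, hBG, hB, hBw⟩ := ih (reducedWeight_nonneg hw hkmin) hP
    obtain ⟨A, hAG, hA, hAw⟩ := hR.exists_isCover_insert_sum_le hpP hw hkG hkp hkmin hBG hB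
    refine ⟨A, hAG, hA, ?_⟩
    calc ∑ g ∈ A, w g
        ≤ ∑ g ∈ G, reducedWeight R p (w k) w g * x g + w k := by grw [hAw, hBw]
      _ = ∑ g ∈ G, w g * x g - w k * ∑ g ∈ G with R g p, x g + w k := by
          rw [sum_reducedWeight_mul]
      _ ≤ ∑ g ∈ G, w g * x g := by
          grw [← le_mul_of_one_le_right (hw k hkG) hp, sub_add_cancel]

end Covering

theorem gammaFree_seesLeft (f : ℝ → ℝ) : GammaFree (SeesLeft f) :=
  fun _ _ _ _ hab hcd hac hbc hbd =>
    ⟨hac.1.trans hcd, hac.2.of_crossing hab hbc.1 hcd hbd.2⟩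

/-- Rounding a fractional solution: the points fractionally half-covered from the
left can be guarded by left guards of total weight at most twice the fractional
cost. -/
theorem left_half_covered_rounding (f : ℝ → ℝ) (G_L N : Finset ℝ) (w x : ℝ → ℝ)
    (hw : ∀ g ∈ G_L, 0 ≤ w g) (hx : ∀ g ∈ G_L, 0 ≤ x g) :
    ∃ A_L ⊆ G_L,
      (∀ p ∈ N, (1/2 : ℝ) ≤ (∑ g ∈ G_L, if SeesLeft f g p then x g else 0) →
        ∃ g ∈ A_L, SeesLeft f g p) ∧
      ∑ g ∈ A_L, w g ≤ 2 * ∑ g ∈ G_L, w g * x g := by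
  let halfCovered : Finset ℝ :=
    {p ∈ N | (1/2 : ℝ) ≤ ∑ g ∈ G_L, if SeesLeft f g p then x g else 0}
  have hcover : IsFractionalCover (SeesLeft f) halfCovered G_L (fun g => 2 * x g) := by
    intro p hp
    have hhalf := (Finset.mem_filter.1 hp).2
    rw [← Finset.sum_filter] at hhalf
    rw [← Finset.mul_sum]
    linarith
  obtain ⟨A, hAG, hA, hAw⟩ := (gammaFree_seesLeft f).exists_isCover_sum_le hw
    (fun g hg => mul_nonneg zero_le_two (hx g hg)) hcover
  refine ⟨A, hAG, fun p hp hhalf => hA p (Finset.mem_filter.2 ⟨hp, hhalf⟩), hAw.trans_eq ?_⟩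
  simp only [Finset.mul_sum, mul_left_comm]
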